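/- Let m ≥ 2, δ ≥ 2, n = m·δ. Let γ : 𝔽₂ⁿ → 𝔽₂ⁿ be a parallel S-box, γ(x₁,…,x_δ) = (γ₁(x₁),…,γ_δ(x_δ)) with each γ_j a bijection of the brick 𝔽₂^m satisfying γ_j(0) ≠ 0, and let λ : 𝔽₂ⁿ → 𝔽₂ⁿ be a bijective 𝔽₂-linear map which preserves no non-trivial type, i.e. for every subset D ⊆ 𝔽₂ⁿ in standard form of non-trivial type, the type of Dλ differs from the type of D; set ρ = λ ∘ γ (γ applied first). Let V = 𝔽₂ⁿ × 𝔽₂ⁿ, identify 𝔽₂ⁿ with ℤ/2ⁿℤ by binary expansion and write ⊞ for the resulting addition modulo 2ⁿ. Define the Feistel map 𝒫 : V → V by 𝒫(x₁, x₂) = (x₂, x₁ ⊕ ρ(x₂)), where ⊕ is the bitwise XOR, and for (k₁,k₂) ∈ V define σ_{(k₁,k₂)}(x₁,x₂) = (x₁ ⊞ k₁, x₂ ⊞ k₂). Then the subgroup Γ∞ of Sym(V) generated by the round functions {σ_k ∘ 𝒫 ∘ σ_h applied in the order σ_k, then 𝒫, then σ_h : k, h ∈ V} is primitive: it acts transitively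 on V, and every Γ∞-invariant partition of V is either {V} or the partition into singletons. -/

import Mathlib

/-!
Write `n = m δ`. The group generated by the round functions contains the Feistel map `𝒫` and all
key additions `σ_k` (`feistel_mem`, `keyAdd_mem`), hence the regular group of translations of
`(ℤ/2ⁿℤ)²`. This gives transitivity, and shows that an invariant partition consists of the cosets
of a subgroup `U ≤ (ℤ/2ⁿℤ)²` (`exists_coset_subgroup`), which are permuted by `𝒫`.

Let `A = {a | (a, 0) ∈ U}`. Invariance under `𝒫^{±1}` gives `A = {b | (0, b) ∈ U}`, and then that
`ρ = λ ∘ γ` maps cosets of `A` to cosets of `A`. As `A = 2^s ℤ/2ⁿℤ`, its cosets are the sets on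
which the `s` low-order bits are prescribed; these are in standard form, all of the same type, and
`γ` maps them to sets in standard form of that type. If `0 < s < n` then `λ` preserves this
non-trivial type, which is excluded (`coset_preserved`). So `A` is everything, and then so is `U`,
or `A = 0`. In the latter case, if `U ≠ 0` it contains an involution, which can only be `(h, h)`
with `h = 2^(n-1)`. Adding `h` modulo `2ⁿ` is the XOR with a fixed vector `ε`, so invariance of `U`
under `𝒫` yields `ρ(y ⊕ ε) = ρ(y)`, contradicting injectivity of `ρ` (`feistel_subgroup`).
-/

open Matrix

/-- The index in `Fin (m * δ)` of the `i`-th coordinate of the `j`-th brick. -/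
def brickIdx (m δ : ℕ) (j : Fin δ) (i : Fin m) : Fin (m * δ) :=
  ⟨m * j.val + i.val, by
    have h1 : m * j.val + i.val < m * (j.val + 1) := by
      rw [Nat.mul_succ]
      exact Nat.add_lt_add_left i.isLt _
    exact lt_of_lt_of_le h1 (Nat.mul_le_mul le_rfl j.isLt)⟩

/-- The projection of a vector on its `j`-th brick. -/
def brickProj (m δ : ℕ) (v : Fin (m * δ) → ZMod 2) (j : Fin δ) : Fin m → ZMod 2 :=
  fun i => v (brickIdx m δ j i)

/-- The `j`-th box of a subset `D`: the projection of `D` on the `j`-th brick. -/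
def box (m δ : ℕ) (D : Set (Fin (m * δ) → ZMod 2)) (j : Fin δ) : Set (Fin m → ZMod 2) :=
  (fun v => brickProj m δ v j) '' D

/-- A box is white if it is a singleton. -/
def IsWhite {α : Type*} (S : Set α) : Prop := ∃ a, S = {a}

/-- A box is black if it is everything. -/
def IsBlack {α : Type*} (S : Set α) : Prop := S = Set.univ

/-- A box is ruled if it is neither white nor black. -/
def IsRuled {α : Type*} (S : Set α) : Prop := ¬ IsWhite S ∧ ¬ IsBlack S

/-- The set `{v_w} × R × 𝔽₂^{m·n_b}` in standard form: the first `nw` bricks are fixed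
(equal to `w`), the brick number `nw` (0-indexed) lies in `R` when `nr = 1`, and the
remaining bricks are free. -/
def StdSet (m δ nw nr : ℕ) (w : Fin δ → Fin m → ZMod 2) (R : Set (Fin m → ZMod 2)) :
    Set (Fin (m * δ) → ZMod 2) :=
  { v | (∀ j : Fin δ, (j : ℕ) < nw → brickProj m δ v j = w j) ∧
        (nr = 1 → ∀ j : Fin δ, (j : ℕ) = nw → brickProj m δ v j ∈ R) }

/-- `D` is in standard form of type `(nw, nr, nb)`. -/
def StdForm (m δ : ℕ) (D : Set (Fin (m * δ) → ZMod 2)) (nw nr nb : ℕ) : Prop :=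
  nw + nr + nb = δ ∧ nr ≤ 1 ∧
  ∃ (w : Fin δ → Fin m → ZMod 2) (R : Set (Fin m → ZMod 2)),
    (nr = 1 → 2 ≤ R.ncard ∧ R.ncard ≤ 2 ^ m - 1) ∧ D = StdSet m δ nw nr w R

/-- `D` has type `(nw, nr, nb)`: its first `nw` boxes are white, the next `nr` boxes are
ruled, and its last `nb` boxes are black. -/
def HasType (m δ : ℕ) (D : Set (Fin (m * δ) → ZMod 2)) (nw nr nb : ℕ) : Prop :=
  nw + nr + nb = δ ∧ nr ≤ 1 ∧
  ∀ j : Fin δ,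
    ((j : ℕ) < nw → IsWhite (box m δ D j)) ∧
    (nw ≤ (j : ℕ) → (j : ℕ) < nw + nr → IsRuled (box m δ D j)) ∧
    (nw + nr ≤ (j : ℕ) → IsBlack (box m δ D j))

/-- `D` and `E` have the same type: corresponding boxes have the same kind. -/
def SameType (m δ : ℕ) (D E : Set (Fin (m * δ) → ZMod 2)) : Prop :=
  ∀ j : Fin δ,
    (IsWhite (box m δ D j) ↔ IsWhite (box m δ E j)) ∧
    (IsBlack (box m δ D j) ↔ IsBlack (box m δ E j))

lemma m_le_mul (m d : ℕ) (h : 1 ≤ d) : m ≤ m * d := by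
  calc m = m * 1 := (Nat.mul_one m).symm
  _ ≤ m * d := Nat.mul_le_mul le_rfl h

lemma shift_lt (m δ a : ℕ) (ha : a ≤ δ) (k : ℕ) (hk : k < m * (δ - a)) :
    m * a + k < m * δ := by
  have h := Nat.add_lt_add_left hk (m * a)
  rwa [← Nat.mul_add, Nat.add_sub_cancel' ha] at h

/-- The index in `Fin (m * δ)` obtained by skipping the first `a` bricks. -/
def shiftIdx (m δ a : ℕ) (ha : a ≤ δ) (k : Fin (m * (δ - a))) : Fin (m * δ) :=
  ⟨m * a + k.val, shift_lt m δ a ha k.val k.isLt⟩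

/-- The submatrix `Λ_{(a+1,b+1):(δ,δ)}` (blocks with row brick ≥ a and column brick ≥ b). -/
def subBlock (m δ : ℕ) (Λ : Matrix (Fin (m * δ)) (Fin (m * δ)) (ZMod 2))
    (a b : ℕ) (ha : a ≤ δ) (hb : b ≤ δ) :
    Matrix (Fin (m * (δ - a))) (Fin (m * (δ - b))) (ZMod 2) :=
  Matrix.of fun r c => Λ (shiftIdx m δ a ha r) (shiftIdx m δ b hb c)

/-- The column of blocks `Λ_{(a+1,j+1):(δ,j+1)}` (row bricks ≥ a, column brick j). -/
def subColBlock (m δ : ℕ) (Λ : Matrix (Fin (m * δ)) (Fin (m * δ)) (ZMod 2))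
    (a : ℕ) (ha : a ≤ δ) (j : Fin δ) :
    Matrix (Fin (m * (δ - a))) (Fin m) (ZMod 2) :=
  Matrix.of fun r c => Λ (shiftIdx m δ a ha r) (brickIdx m δ j c)

/-- The row of blocks `Λ_{(j+1,1):(j+1,c2)}` (row brick j, column bricks < c2). -/
def rowBlock (m δ : ℕ) (Λ : Matrix (Fin (m * δ)) (Fin (m * δ)) (ZMod 2))
    (j : Fin δ) (c2 : ℕ) (hc : c2 ≤ δ) :
    Matrix (Fin m) (Fin (m * c2)) (ZMod 2) :=
  Matrix.of fun i c => Λ (brickIdx m δ j i) (Fin.castLE (Nat.mul_le_mul le_rfl hc) c)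

/-- The block `Λ_{j+1, j'+1}`. -/
def block (m δ : ℕ) (Λ : Matrix (Fin (m * δ)) (Fin (m * δ)) (ZMod 2)) (j j' : Fin δ) :
    Matrix (Fin m) (Fin m) (ZMod 2) :=
  Matrix.of fun i i' => Λ (brickIdx m δ j i) (brickIdx m δ j' i')

/-- The set `R × 𝔽₂^{m (d-1)}` of vectors of `d` bricks whose first brick lies in `R`. -/
def rulDomain (m d : ℕ) (hd : 1 ≤ d) (R : Set (Fin m → ZMod 2)) :
    Set (Fin (m * d) → ZMod 2) :=
  { u | (fun i : Fin m => u (Fin.castLE (m_le_mul m d hd) i)) ∈ R }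

/-- The identification `𝔽₂ⁿ → ℤ/2ⁿℤ` by binary expansion: `(a₀,…,a_{n-1}) ↦ ∑ aᵢ 2ⁱ`. -/
def vecToZMod (n : ℕ) (v : Fin n → ZMod 2) : ZMod (2 ^ n) :=
  ∑ i : Fin n, ((v i).val : ZMod (2 ^ n)) * 2 ^ (i : ℕ)

/-- The inverse identification `ℤ/2ⁿℤ → 𝔽₂ⁿ`: the binary digits of the representative. -/
def zmodToVec (n : ℕ) (x : ZMod (2 ^ n)) : Fin n → ZMod 2 :=
  fun i => (((x.val / 2 ^ (i : ℕ)) % 2 : ℕ) : ZMod 2)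

/-- Addition modulo `2ⁿ` transported to `𝔽₂ⁿ` via binary expansion: `v ⊞ k`. -/
def boxAdd (n : ℕ) (v k : Fin n → ZMod 2) : Fin n → ZMod 2 :=
  zmodToVec n (vecToZMod n v + vecToZMod n k)

/-! ### Binary expansions -/

lemma sum_digits (N k : ℕ) :
    ∑ i ∈ Finset.range k, (N / 2 ^ i % 2) * 2 ^ i = N % 2 ^ k := by
  induction k with
  | zero => simp [Nat.mod_one]
  | succ k ih => rw [Finset.sum_range_succ, ih, Nat.mod_pow_succ, mul_comm]

lemma vec_zmodToVec (n : ℕ) (x : ZMod (2 ^ n)) : vecToZMod n (zmodToVec n x) = x := by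
  have h := sum_digits x.val n
  rw [Nat.mod_eq_of_lt (ZMod.val_lt x), Finset.sum_range] at h
  conv_rhs => rw [← ZMod.natCast_zmod_val x, ← h]
  simp only [vecToZMod, zmodToVec, ZMod.val_natCast, Nat.mod_mod]
  push_cast
  rfl

/-- Binary expansion as a bijection `𝔽₂ⁿ ≃ ℤ/2ⁿℤ`. -/
def binEquiv (n : ℕ) : (Fin n → ZMod 2) ≃ ZMod (2 ^ n) where
  toFun := vecToZMod n
  invFun := zmodToVec n
  left_inv := by
    have hinj : Function.Injective (zmodToVec n) :=
      Function.LeftInverse.injective (vec_zmodToVec n)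
    have hbij : Function.Bijective (zmodToVec n) :=
      (Fintype.bijective_iff_injective_and_card _).2 ⟨hinj, by simp [ZMod.card]⟩
    intro v
    obtain ⟨x, rfl⟩ := hbij.2 v
    rw [vec_zmodToVec]
  right_inv := vec_zmodToVec n

lemma boxAdd_eq (n : ℕ) (v k : Fin n → ZMod 2) :
    boxAdd n v k = (binEquiv n).symm (binEquiv n v + binEquiv n k) := rfl

lemma agree_iff_modEq (n s : ℕ) (hs : s ≤ n) (v w : Fin n → ZMod 2) :
    (∀ i : Fin n, (i : ℕ) < s → v i = w i) ↔
      (binEquiv n v).val ≡ (binEquiv n w).val [MOD 2 ^ s] := by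
  have key : ∀ (u : Fin n → ZMod 2) (i : Fin n),
      u i = (((binEquiv n u).val / 2 ^ (i : ℕ) % 2 : ℕ) : ZMod 2) := by
    intro u i
    conv_lhs => rw [← (binEquiv n).symm_apply_apply u]
    rfl
  constructor
  · intro h
    unfold Nat.ModEq
    rw [← sum_digits, ← sum_digits]
    refine Finset.sum_congr rfl fun i hi => ?_
    have hi := Finset.mem_range.1 hi
    have := h ⟨i, by omega⟩ hi
    rw [key v, key w, ZMod.natCast_eq_natCast_iff'] at this
    simp only [Nat.mod_mod] at this
    rw [this]
  · intro h i hi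
    rw [key v, key w]
    congr 1
    have h2 : ∀ N : ℕ, N / 2 ^ (i : ℕ) % 2 = N % 2 ^ s / 2 ^ (i : ℕ) % 2 := by
      intro N
      have h3 : ∀ M : ℕ, M / 2 ^ (i : ℕ) % 2 = (M.testBit i).toNat := by
        intro M; rw [Nat.toNat_testBit]
      rw [h3, h3, Nat.testBit_mod_two_pow]
      simp [hi]
    rw [h2, h2 (binEquiv n w).val, h]

/-- Two vectors agree on their `s` low-order coordinates iff their difference in `ℤ/2ⁿℤ` is a
multiple of `2^s`. -/
lemma agree_iff_dvd (n s : ℕ) (hs : s ≤ n) (v w : Fin n → ZMod 2) (z : ℤ)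
    (hz : binEquiv n v - binEquiv n w = (z : ZMod (2 ^ n))) :
    (∀ i : Fin n, (i : ℕ) < s → v i = w i) ↔ (2 : ℤ) ^ s ∣ z := by
  rw [agree_iff_modEq n s hs, ← Int.natCast_modEq_iff, Int.modEq_comm, Int.modEq_iff_dvd]
  have h1 : (((binEquiv n v).val - (binEquiv n w).val : ℤ) : ZMod (2 ^ n)) = (z : ZMod (2 ^ n)) := by
    push_cast
    rw [ZMod.natCast_zmod_val, ZMod.natCast_zmod_val, hz]
  rw [ZMod.intCast_eq_intCast_iff_dvd_sub] at h1
  have h2 : (2 : ℤ) ^ s ∣ z - ((binEquiv n v).val - (binEquiv n w).val) := by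
    refine dvd_trans (pow_dvd_pow 2 hs) ?_
    exact_mod_cast h1
  push_cast
  exact dvd_iff_dvd_of_dvd_sub (by simpa using (dvd_neg.2 h2))

/-- A coset of a subgroup of `ℤ/2ⁿℤ` prescribes the low-order coordinates. -/
lemma subgroup_low_bits (n : ℕ) (A : AddSubgroup (ZMod (2 ^ n))) :
    ∃ s ≤ n, ∀ v w : Fin n → ZMod 2,
      binEquiv n v - binEquiv n w ∈ A ↔ ∀ i : Fin n, (i : ℕ) < s → v i = w i := by
  obtain ⟨d, hd⟩ := Int.subgroup_cyclic (A.comap (Int.castAddHom (ZMod (2 ^ n))))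
  have hmem : ∀ z : ℤ, (z : ZMod (2 ^ n)) ∈ A ↔ d ∣ z := by
    intro z
    have : z ∈ A.comap (Int.castAddHom (ZMod (2 ^ n))) ↔ (z : ZMod (2 ^ n)) ∈ A := Iff.rfl
    rw [← this, hd, ← AddSubgroup.zmultiples_eq_closure, Int.mem_zmultiples_iff]
  have h1 : d ∣ (2 ^ n : ℤ) := by
    rw [← hmem]
    have : (((2 ^ n : ℕ) : ℤ) : ZMod (2 ^ n)) = 0 := by
      rw [Int.cast_natCast, ZMod.natCast_self]
    push_cast at this ⊢
    rw [this]; exact A.zero_mem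
  have h2 : d.natAbs ∣ 2 ^ n := by
    have := Int.natAbs_dvd_natAbs.2 h1
    simpa [Int.natAbs_pow] using this
  obtain ⟨s, hs, hds⟩ := (Nat.dvd_prime_pow Nat.prime_two).1 h2
  refine ⟨s, hs, fun v w => ?_⟩
  have hz : binEquiv n v - binEquiv n w =
      ((((binEquiv n v - binEquiv n w).val : ℕ) : ℤ) : ZMod (2 ^ n)) := by
    rw [Int.cast_natCast, ZMod.natCast_zmod_val]
  rw [agree_iff_dvd n s hs v w _ hz, hz, hmem, ← Int.natAbs_dvd, hds]
  push_cast
  simp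

/-- Adding the element of order two in `ℤ/2ⁿℤ` is the XOR with the most significant bit. -/
lemma symm_add_order_two (n : ℕ) (h : ZMod (2 ^ n)) (h0 : h ≠ 0) (h2 : h + h = 0) :
    ∃ ε : Fin n → ZMod 2, ∀ x, (binEquiv n).symm (x + h) = (binEquiv n).symm x + ε := by
  obtain _ | n := n
  · exact absurd (Subsingleton.elim (α := ZMod 1) h 0) h0
  have hdvd : (2 : ℤ) ^ n ∣ (h.val : ℤ) := by
    have : ((2 * h.val : ℕ) : ZMod (2 ^ (n + 1))) = 0 := by
      push_cast
      rw [ZMod.natCast_zmod_val, two_mul, h2]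
    rw [ZMod.natCast_eq_zero_iff] at this
    exact_mod_cast Nat.dvd_of_mul_dvd_mul_left two_pos ((pow_succ' 2 n).symm.dvd.trans this)
  refine ⟨Pi.single (Fin.last n) 1, fun x => ?_⟩
  set v := (binEquiv (n + 1)).symm (x + h) with hv
  set w := (binEquiv (n + 1)).symm x with hw
  have hlow := (agree_iff_dvd (n + 1) n (by omega) v w h.val (by simp [hv, hw])).2 hdvd
  have hlast : v (Fin.last n) ≠ w (Fin.last n) := by
    intro hl
    apply h0
    have : v = w := by
      funext i
      by_cases hi : (i : ℕ) < n
      · exact hlow i hi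
      · have : i = Fin.last n := Fin.ext (by simp; omega)
        rw [this, hl]
    rw [hv, hw, (binEquiv (n + 1)).symm.injective.eq_iff] at this
    simpa using this
  have two : ∀ a b : ZMod 2, a ≠ b → a = b + 1 := by decide
  funext i
  by_cases hi : i = Fin.last n
  · subst hi
    simpa using two _ _ hlast
  · have : (i : ℕ) < n := by
      have := i.isLt
      have : (i : ℕ) ≠ n := fun h => hi (Fin.ext (by simpa using h))
      omega
    simp [hi, hlow i this]

/-- A nontrivial subgroup of `(ℤ/2ⁿℤ)²` contains an involution. -/
lemma exists_order_two (n : ℕ) (U : AddSubgroup (ZMod (2 ^ n) × ZMod (2 ^ n)))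
    (u : ZMod (2 ^ n) × ZMod (2 ^ n)) (hu : u ∈ U) (hu0 : u ≠ 0) :
    ∃ t ∈ U, t ≠ 0 ∧ t + t = 0 := by
  have hex : ∃ k : ℕ, (2 ^ k) • u = 0 := by
    refine ⟨n, ?_⟩
    have : ∀ x : ZMod (2 ^ n), (2 ^ n) • x = 0 := fun x => by
      rw [nsmul_eq_mul, ZMod.natCast_self, zero_mul]
    exact Prod.ext (this _) (this _)
  classical
  obtain ⟨k, hk⟩ : ∃ k, Nat.find hex = k + 1 := by
    refine Nat.exists_eq_succ_of_ne_zero fun h => hu0 ?_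
    have := Nat.find_spec hex
    rw [h] at this
    simpa using this
  refine ⟨(2 ^ k) • u, U.nsmul_mem hu _, Nat.find_min hex (by omega), ?_⟩
  have := Nat.find_spec hex
  rw [hk, pow_succ, mul_two, add_nsmul] at this
  exact this

lemma eq_of_order_two (n : ℕ) (a b : ZMod (2 ^ n)) (ha : a ≠ 0) (ha2 : a + a = 0)
    (hb : b ≠ 0) (hb2 : b + b = 0) : a = b := by
  have key : ∀ c : ZMod (2 ^ n), c ≠ 0 → c + c = 0 → 2 * c.val = 2 ^ n := by
    intro c hc hc2
    have h1 : ((2 * c.val : ℕ) : ZMod (2 ^ n)) = 0 := by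
      push_cast
      rw [ZMod.natCast_zmod_val, two_mul, hc2]
    rw [ZMod.natCast_eq_zero_iff] at h1
    obtain ⟨q, hq⟩ := h1
    have hlt := ZMod.val_lt c
    have hpos : 0 < c.val := Nat.pos_of_ne_zero fun h => hc ((ZMod.val_eq_zero c).1 h)
    have : q = 1 := by
      rcases q with _ | _ | q
      · omega
      · rfl
      · nlinarith
    rw [hq, this, mul_one]
  apply ZMod.val_injective
  have h1 := key a ha ha2
  have h2 := key b hb hb2
  omega

/-! ### Types of sets in standard form -/

lemma exists_brickIdx (m δ : ℕ) (i : Fin (m * δ)) :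
    ∃ (j : Fin δ) (k : Fin m), i = brickIdx m δ j k := by
  have hi := i.isLt
  have hm : 0 < m := Nat.pos_of_ne_zero (by rintro rfl; omega)
  refine ⟨⟨i / m, (Nat.div_lt_iff_lt_mul hm).2 (hi.trans_eq (mul_comm _ _))⟩,
    ⟨i % m, Nat.mod_lt _ hm⟩, Fin.ext ?_⟩
  exact (Nat.div_add_mod _ _).symm

lemma brickProj_ext (m δ : ℕ) {v w : Fin (m * δ) → ZMod 2}
    (h : ∀ j, brickProj m δ v j = brickProj m δ w j) : v = w := by
  funext i
  obtain ⟨j, k, rfl⟩ := exists_brickIdx m δ i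
  exact congrFun (h j) k

/-- A vector with prescribed bricks. -/
lemma exists_brickProj (m δ : ℕ) (f : Fin δ → Fin m → ZMod 2) :
    ∃ v : Fin (m * δ) → ZMod 2, ∀ j, brickProj m δ v j = f j := by
  choose J K hJK using exists_brickIdx m δ
  refine ⟨fun i => f (J i) (K i), fun j => funext fun k => ?_⟩
  have h : m * (j : ℕ) + k = m * (J (brickIdx m δ j k) : ℕ) + K (brickIdx m δ j k) :=
    congrArg Fin.val (hJK (brickIdx m δ j k))
  have hm : 0 < m := k.pos
  have e1 : (J (brickIdx m δ j k)) = j := by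
    apply Fin.ext
    have := congrArg (· / m) h
    simpa [Nat.mul_add_div hm, Nat.div_eq_of_lt] using this.symm
  have e2 : (K (brickIdx m δ j k)) = k := by
    apply Fin.ext
    have := congrArg (· % m) h
    simpa [Nat.mul_add_mod, Nat.mod_eq_of_lt] using this.symm
  simp only [brickProj]
  rw [e1, e2]

lemma box_stdSet (m δ nw nr : ℕ) (w : Fin δ → Fin m → ZMod 2) (R : Set (Fin m → ZMod 2))
    (hR : nr = 1 → R.Nonempty) (j : Fin δ) :
    box m δ (StdSet m δ nw nr w R) j =
      {u | ((j : ℕ) < nw → u = w j) ∧ (nr = 1 → (j : ℕ) = nw → u ∈ R)} := by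
  ext u
  constructor
  · rintro ⟨v, ⟨h1, h2⟩, rfl⟩
    exact ⟨h1 j, fun hr hj => h2 hr j hj⟩
  · rintro ⟨h1, h2⟩
    classical
    obtain ⟨r, hr⟩ : ∃ r, nr = 1 → r ∈ R := by
      by_cases h : nr = 1
      · obtain ⟨r, hr⟩ := hR h
        exact ⟨r, fun _ => hr⟩
      · exact ⟨0, fun h' => absurd h' h⟩
    obtain ⟨v, hv⟩ := exists_brickProj m δ
      (fun j' => if j' = j then u else if (j' : ℕ) < nw then w j' else r)
    refine ⟨v, ⟨fun j' hj' => ?_, fun h j' hj' => ?_⟩, ?_⟩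
    · rw [hv]
      split_ifs with h
      · subst h; exact h1 hj'
      · rfl
    · rw [hv]
      split_ifs with h3 h4
      · subst h3; exact h2 h hj'
      · omega
      · exact hr h
    · simp [hv]

/-- The kind of each box of a set in standard form is determined by its type. -/
lemma StdForm.kind {m δ nw nr nb : ℕ} {D : Set (Fin (m * δ) → ZMod 2)} (hm : 1 ≤ m)
    (hD : StdForm m δ D nw nr nb) (j : Fin δ) :
    (IsWhite (box m δ D j) ↔ (j : ℕ) < nw) ∧ (IsBlack (box m δ D j) ↔ nw + nr ≤ (j : ℕ)) := by
  obtain ⟨-, hnr, w, R, hR, rfl⟩ := hD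
  have hne : nr = 1 → R.Nonempty := fun h => by
    have := (hR h).1
    exact Set.nonempty_of_ncard_ne_zero (by omega)
  rw [box_stdSet m δ nw nr w R hne]
  have hcard : (Set.univ : Set (Fin m → ZMod 2)).ncard = 2 ^ m := by
    simp [Set.ncard_univ, Nat.card_eq_fintype_card]
  have h2m : 2 ≤ 2 ^ m := by
    calc 2 = 2 ^ 1 := rfl
      _ ≤ 2 ^ m := Nat.pow_le_pow_right two_pos hm
  have hwhite : ∀ S : Set (Fin m → ZMod 2), IsWhite S → S.ncard = 1 := by
    rintro S ⟨a, rfl⟩; simp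
  have hblack : ∀ S : Set (Fin m → ZMod 2), IsBlack S → S.ncard = 2 ^ m := by
    rintro S rfl; exact hcard
  rcases lt_trichotomy (j : ℕ) nw with h | h | h
  · have e : {u | ((j : ℕ) < nw → u = w j) ∧ (nr = 1 → (j : ℕ) = nw → u ∈ R)} = {w j} := by
      ext u; simp [h, h.ne]
    rw [e]
    refine ⟨iff_of_true ⟨_, rfl⟩ h, iff_of_false (fun hb => ?_) (by omega)⟩
    have := hblack _ hb
    simp at this
    omega
  · by_cases hr : nr = 1
    · have e : {u | ((j : ℕ) < nw → u = w j) ∧ (nr = 1 → (j : ℕ) = nw → u ∈ R)} = R := by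
        ext u; simp [h, hr]
      rw [e]
      have := hR hr
      refine ⟨iff_of_false (fun hb => ?_) (by omega), iff_of_false (fun hb => ?_) (by omega)⟩
      · have := hwhite _ hb; omega
      · have := hblack _ hb; omega
    · have e : {u | ((j : ℕ) < nw → u = w j) ∧ (nr = 1 → (j : ℕ) = nw → u ∈ R)} =
          Set.univ := by
        ext u; simp [h, hr]
      rw [e]
      refine ⟨iff_of_false (fun hb => ?_) (by omega), iff_of_true rfl (by omega)⟩
      have := hwhite _ hb; omega
  · have e : {u | ((j : ℕ) < nw → u = w j) ∧ (nr = 1 → (j : ℕ) = nw → u ∈ R)} =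
        Set.univ := by
      ext u; simp [h.ne', h.not_gt]
    rw [e]
    refine ⟨iff_of_false (fun hb => ?_) (by omega), iff_of_true rfl (by omega)⟩
    have := hwhite _ hb; omega

lemma StdForm.sameType {m δ nw nr nb : ℕ} {D E : Set (Fin (m * δ) → ZMod 2)} (hm : 1 ≤ m)
    (hD : StdForm m δ D nw nr nb) (hE : StdForm m δ E nw nr nb) : SameType m δ D E :=
  fun j => ⟨(hD.kind hm j).1.trans (hE.kind hm j).1.symm,
    (hD.kind hm j).2.trans (hE.kind hm j).2.symm⟩

/-- Prescribing the `s` low-order coordinates defines a set in standard form, with `s / m` white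
boxes and a ruled box exactly when `m` does not divide `s`. -/
lemma stdForm_lowBits (m δ s : ℕ) (hm : 1 ≤ m) (hs : s ≤ m * δ) :
    ∃ nw nr nb, (nw = δ → s = m * δ) ∧ (nb = δ → s = 0) ∧ ∀ c : Fin (m * δ) → ZMod 2,
      StdForm m δ {v | ∀ i : Fin (m * δ), (i : ℕ) < s → v i = c i} nw nr nb := by
  have hdm := Nat.div_add_mod s m
  have htm : s % m < m := Nat.mod_lt _ hm
  generalize s / m = q at hdm
  generalize s % m = t at hdm htm
  have hqδ : q ≤ δ := by
    by_contra hlt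
    push Not at hlt
    have : m * (δ + 1) ≤ m * q := Nat.mul_le_mul le_rfl hlt
    rw [Nat.mul_succ] at this
    omega
  by_cases ht0 : t = 0
  · refine ⟨q, 0, δ - q, fun h => by rw [← h]; omega, fun h => ?_, fun c => ?_⟩
    · have : q = 0 ∨ δ = 0 := by omega
      rcases this with h | h
      · rw [h] at hdm; omega
      · rw [h] at hs; omega
    · refine ⟨by omega, by omega, brickProj m δ c, Set.univ, by simp, ?_⟩
      ext v
      constructor
      · intro h
        refine ⟨fun j hj => funext fun k => h _ ?_, by simp⟩
        have : m * (j + 1) ≤ m * q := Nat.mul_le_mul le_rfl hj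
        rw [Nat.mul_succ] at this
        have := k.isLt
        simp only [brickIdx]
        omega
      · rintro ⟨h, -⟩ i hi
        obtain ⟨j, k, rfl⟩ := exists_brickIdx m δ i
        refine congrFun (h j ?_) k
        by_contra hlt
        push Not at hlt
        have := Nat.mul_le_mul (le_refl m) hlt
        simp only [brickIdx] at hi
        omega
  · have hqlt : q < δ := by
      refine lt_of_le_of_ne hqδ fun h => ?_
      rw [h] at hdm; omega
    have hnb : δ - (q + 1) ≠ δ := (Nat.sub_lt (by omega) (by omega)).ne
    refine ⟨q, 1, δ - (q + 1), fun h => absurd h hqlt.ne, fun h => absurd h hnb, fun c => ?_⟩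
    refine ⟨by omega, le_rfl, brickProj m δ c,
      {u | ∀ k : Fin m, (k : ℕ) < t → u k = brickProj m δ c ⟨q, hqlt⟩ k}, fun _ => ?_, ?_⟩
    · set b := brickProj m δ c ⟨q, hqlt⟩
      constructor
      · have hpair : ({b, b + Pi.single ⟨m - 1, by omega⟩ 1} : Set (Fin m → ZMod 2)) ⊆
            {u | ∀ k : Fin m, (k : ℕ) < t → u k = b k} := by
          rintro u (rfl | rfl) k hk
          · rfl
          · have : k ≠ ⟨m - 1, by omega⟩ := by
              intro h
              have := congrArg Fin.val h
              simp only at this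
              omega
            simp [this]
        have hc := Set.ncard_le_ncard hpair (Set.toFinite _)
        rwa [Set.ncard_pair] at hc
        intro h
        have := congrFun h ⟨m - 1, by omega⟩
        simp at this
      · have hss : {u : Fin m → ZMod 2 | ∀ k : Fin m, (k : ℕ) < t → u k = b k} ⊂ Set.univ := by
          refine Set.ssubset_univ_iff.2 fun h => ?_
          have hmem : b + Pi.single ⟨0, hm⟩ 1 ∈
              {u : Fin m → ZMod 2 | ∀ k : Fin m, (k : ℕ) < t → u k = b k} := by
            rw [h]; trivial
          have := hmem ⟨0, hm⟩ (Nat.pos_of_ne_zero ht0)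
          simp at this
        have hc := Set.ncard_lt_ncard hss (Set.toFinite _)
        have hcard : (Set.univ : Set (Fin m → ZMod 2)).ncard = 2 ^ m := by
          simp [Set.ncard_univ, Nat.card_eq_fintype_card]
        omega
    · ext v
      constructor
      · intro h
        refine ⟨fun j hj => funext fun k => h _ ?_, fun _ j hj k hk => ?_⟩
        · have : m * (j + 1) ≤ m * q := Nat.mul_le_mul le_rfl hj
          rw [Nat.mul_succ] at this
          have := k.isLt
          simp only [brickIdx]
          omega
        · have hj' : j = ⟨q, hqlt⟩ := Fin.ext hj
          subst hj'
          refine h _ ?_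
          simp only [brickIdx]
          omega
      · rintro ⟨h1, h2⟩ i hi
        obtain ⟨j, k, rfl⟩ := exists_brickIdx m δ i
        rcases lt_trichotomy (j : ℕ) q with hj | hj | hj
        · exact congrFun (h1 j hj) k
        · have hj' : j = ⟨q, hqlt⟩ := Fin.ext hj
          subst hj'
          refine h2 rfl _ rfl k ?_
          simp only [brickIdx] at hi
          omega
        · have := Nat.mul_le_mul (le_refl m) (Nat.succ_le_of_lt hj)
          rw [Nat.mul_succ] at this
          simp only [brickIdx] at hi
          omega

/-- A parallel S-box maps a set in standard form to one of the same type. -/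
lemma StdForm.image_sbox {m δ nw nr nb : ℕ} {D : Set (Fin (m * δ) → ZMod 2)}
    (γbrick : Fin δ → (Fin m → ZMod 2) → (Fin m → ZMod 2))
    (hγbij : ∀ j, Function.Bijective (γbrick j))
    (γ : (Fin (m * δ) → ZMod 2) → (Fin (m * δ) → ZMod 2))
    (hγ : ∀ v (j : Fin δ), brickProj m δ (γ v) j = γbrick j (brickProj m δ v j))
    (hD : StdForm m δ D nw nr nb) : StdForm m δ (γ '' D) nw nr nb := by
  obtain ⟨hsum, hnr, w, R, hR, rfl⟩ := hD
  refine ⟨hsum, hnr, fun j => γbrick j (w j),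
    {u | ∀ j : Fin δ, (j : ℕ) = nw → u ∈ γbrick j '' R}, fun h => ?_, ?_⟩
  · have hlt : nw < δ := by omega
    have e : {u | ∀ j : Fin δ, (j : ℕ) = nw → u ∈ γbrick j '' R} = γbrick ⟨nw, hlt⟩ '' R := by
      ext u
      refine ⟨fun h => h ⟨nw, hlt⟩ rfl, fun h j hj => ?_⟩
      have : j = ⟨nw, hlt⟩ := Fin.ext hj
      rwa [this]
    rw [e, Set.ncard_image_of_injective _ (hγbij _).1]
    exact hR h
  · ext v
    constructor
    · rintro ⟨v, ⟨h1, h2⟩, rfl⟩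
      refine ⟨fun j hj => by rw [hγ, h1 j hj], fun h j hj j' hj' => ?_⟩
      obtain rfl : j = j' := Fin.ext (hj.trans hj'.symm)
      rw [hγ]
      exact ⟨_, h2 h j hj, rfl⟩
    · rintro ⟨h1, h2⟩
      choose g hg using fun j => (hγbij j).2 (brickProj m δ v j)
      obtain ⟨u, hu⟩ := exists_brickProj m δ g
      refine ⟨u, ⟨fun j hj => ?_, fun h j hj => ?_⟩, brickProj_ext m δ fun j => ?_⟩
      · apply (hγbij j).1
        rw [hu, hg, h1 j hj]
      · obtain ⟨r, hr, hr'⟩ := h2 h j hj j hj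
        rw [hu]
        rwa [← (hγbij j).1 (hr'.trans (hg j).symm)]
      · rw [hγ, hu, hg]

/-! ### Subgroups preserved by the round function -/

/-- If `ρ = λ ∘ γ` maps cosets of a subgroup `A` of `ℤ/2ⁿℤ` into cosets of `A`, then `A` is trivial:
a coset of `A` is in standard form, `γ` preserves its type, so `λ` would too. -/
lemma coset_preserved (m δ : ℕ) (hm : 1 ≤ m)
    (γbrick : Fin δ → (Fin m → ZMod 2) → (Fin m → ZMod 2))
    (hγbij : ∀ j, Function.Bijective (γbrick j))
    (γ : (Fin (m * δ) → ZMod 2) → (Fin (m * δ) → ZMod 2))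
    (hγ : ∀ v (j : Fin δ), brickProj m δ (γ v) j = γbrick j (brickProj m δ v j))
    (lam : (Fin (m * δ) → ZMod 2) → (Fin (m * δ) → ZMod 2))
    (hinj : Function.Injective fun v => lam (γ v))
    (hntp : ∀ (D : Set (Fin (m * δ) → ZMod 2)) (nw nr nb : ℕ),
      StdForm m δ D nw nr nb → nw ≠ δ → nb ≠ δ →
      ¬ SameType m δ D ((fun v => lam v) '' D))
    (A : AddSubgroup (ZMod (2 ^ (m * δ))))
    (hA : ∀ v w, binEquiv (m * δ) v - binEquiv (m * δ) w ∈ A →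
      binEquiv (m * δ) (lam (γ v)) - binEquiv (m * δ) (lam (γ w)) ∈ A) :
    A = ⊥ ∨ A = ⊤ := by
  obtain ⟨s, hs, hmem⟩ := subgroup_low_bits (m * δ) A
  have hmem0 : ∀ a, a ∈ A ↔ ∀ i : Fin (m * δ), (i : ℕ) < s →
      (binEquiv (m * δ)).symm a i = (binEquiv (m * δ)).symm 0 i := by
    intro a
    rw [← hmem]
    simp
  by_cases hs0 : s = 0
  · right
    rw [AddSubgroup.eq_top_iff']
    intro a
    rw [hmem0]
    intro i hi
    omega
  by_cases hsn : s = m * δ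
  · left
    rw [AddSubgroup.eq_bot_iff_forall]
    intro a ha
    rw [hmem0] at ha
    apply (binEquiv (m * δ)).symm.injective
    funext i
    exact ha i (by have := i.isLt; omega)
  exfalso
  obtain ⟨nw, nr, nb, hnw, hnb, hstd⟩ := stdForm_lowBits m δ s hm hs
  let C : (Fin (m * δ) → ZMod 2) → Set (Fin (m * δ) → ZMod 2) :=
    fun c => {v | ∀ i : Fin (m * δ), (i : ℕ) < s → v i = c i}
  have hcard : ∀ c c', (C c).ncard ≤ (C c').ncard := by
    intro c c'
    refine Set.ncard_le_ncard_of_injOn (fun v => v + (c' - c)) ?_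
      ((add_left_injective _).injOn) (Set.toFinite _)
    intro v hv i hi
    simp [hv i hi]
  have himg : (fun v => lam v) '' (γ '' C 0) = C (lam (γ 0)) := by
    rw [Set.image_image]
    refine Set.eq_of_subset_of_ncard_le ?_ ?_ (Set.toFinite _)
    · rintro _ ⟨v, hv, rfl⟩
      exact (hmem _ _).1 (hA v 0 ((hmem _ _).2 hv))
    · rw [Set.ncard_image_of_injective _ hinj]
      exact hcard _ _
  have hD : StdForm m δ (γ '' C 0) nw nr nb := (hstd 0).image_sbox γbrick hγbij γ hγ
  refine hntp _ nw nr nb hD (fun h => hsn (hnw h)) (fun h => hs0 (hnb h)) ?_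
  rw [himg]
  exact hD.sameType hm (hstd _)

/-- A subgroup `U` of `(ℤ/2ⁿℤ)²` whose cosets are permuted by the Feistel map
`(x, y) ↦ (y, x ⊕ ρ(y))` is trivial, provided `ρ` is a bijection preserving the cosets of no
nontrivial subgroup of `ℤ/2ⁿℤ`. -/
lemma feistel_subgroup (n : ℕ) (ρ : (Fin n → ZMod 2) → (Fin n → ZMod 2))
    (hρ : Function.Bijective ρ)
    (hA : ∀ A : AddSubgroup (ZMod (2 ^ n)),
      (∀ v w, binEquiv n v - binEquiv n w ∈ A → binEquiv n (ρ v) - binEquiv n (ρ w) ∈ A) →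
      A = ⊥ ∨ A = ⊤)
    (U : AddSubgroup (ZMod (2 ^ n) × ZMod (2 ^ n)))
    (hU : ∀ x y x' y' : Fin n → ZMod 2,
      (binEquiv n x' - binEquiv n x, binEquiv n y' - binEquiv n y) ∈ U ↔
      (binEquiv n y' - binEquiv n y, binEquiv n (x' + ρ y') - binEquiv n (x + ρ y)) ∈ U) :
    U = ⊥ ∨ U = ⊤ := by
  -- The two intersections of `U` with the coordinate axes coincide; call their common value `A`.
  have hswap : ∀ a, (a, 0) ∈ U ↔ (0, a) ∈ U := by
    intro a
    obtain ⟨y, hy⟩ := hρ.2 0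
    have := hU ((binEquiv n).symm 0) y ((binEquiv n).symm a) y
    simpa [hy] using this
  have hpres := hA (U.comap (AddMonoidHom.inl _ _)) (by
    intro v w hvw
    have h1 : (binEquiv n v - binEquiv n w, 0) ∈ U := hvw
    have h2 := (hU 0 w 0 v).1 (by simpa using (hswap _).1 h1)
    have h3 := U.sub_mem h2 h1
    have h4 : (0, binEquiv n (ρ v) - binEquiv n (ρ w)) ∈ U := by simpa using h3
    exact (hswap _).2 h4)
  rcases hpres with hbot | htop
  · left
    have hA0 : ∀ a, (a, 0) ∈ U → a = 0 := by
      intro a ha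
      have : a ∈ U.comap (AddMonoidHom.inl _ _) := ha
      rwa [hbot, AddSubgroup.mem_bot] at this
    have hB0 : ∀ a, (0, a) ∈ U → a = 0 := fun a ha => hA0 a ((hswap a).2 ha)
    by_contra hne
    obtain ⟨⟨u, hu⟩, hu'⟩ := AddSubgroup.ne_bot_iff_exists_ne_zero.1 hne
    have hu0 : u ≠ 0 := fun h => hu' (Subtype.ext h)
    obtain ⟨⟨p, q⟩, ht, ht0, ht2⟩ := exists_order_two n U u hu hu0
    have hp2 : p + p = 0 := congrArg Prod.fst ht2
    have hq2 : q + q = 0 := congrArg Prod.snd ht2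
    have hp : p ≠ 0 := by
      rintro rfl
      exact ht0 (by rw [hB0 q ht]; rfl)
    have hq : q ≠ 0 := by
      rintro rfl
      exact ht0 (by rw [hA0 p ht]; rfl)
    obtain rfl := eq_of_order_two n p q hp hp2 hq hq2
    -- Adding the involution `p` is XOR with `ε`, so it commutes with XOR and `ρ (· ⊕ ε) = ρ`.
    obtain ⟨ε, hε⟩ := symm_add_order_two n p hp hp2
    have hε' : ∀ v, binEquiv n (v + ε) = binEquiv n v + p := by
      intro v
      rw [← (binEquiv n).apply_symm_apply (binEquiv n v + p), hε, Equiv.symm_apply_apply]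
    have h1 := (hU 0 0 (0 + ε) (0 + ε)).1 (by rw [hε']; simpa using ht)
    have h2 := U.sub_mem h1 ht
    have e1 : (0 + ε + ρ (0 + ε) : Fin n → ZMod 2) = ρ (0 + ε) + ε := by abel
    rw [e1, hε' (ρ (0 + ε)), hε' 0] at h2
    have h3 : (0, binEquiv n (ρ (0 + ε)) - binEquiv n (ρ 0)) ∈ U := by
      convert h2 using 1
      ext
      · simp
      · simp; abel
    have h4 := hρ.1 ((binEquiv n).injective (sub_eq_zero.1 (hB0 _ h3)))
    have h5 := hε' 0
    rw [h4] at h5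
    exact hp (by simpa using h5)
  · right
    have hAtop : ∀ a, (a, 0) ∈ U := by
      intro a
      have : a ∈ U.comap (AddMonoidHom.inl _ _) := by rw [htop]; trivial
      exact this
    rw [AddSubgroup.eq_top_iff']
    rintro ⟨a, b⟩
    have := U.add_mem (hAtop a) ((hswap b).1 (hAtop b))
    simpa using this

/-! ### The group generated by the round functions -/

/-- Binary expansion on both branches. -/
def binEquiv₂ (n : ℕ) :
    (Fin n → ZMod 2) × (Fin n → ZMod 2) ≃ ZMod (2 ^ n) × ZMod (2 ^ n) :=
  (binEquiv n).prodCongr (binEquiv n)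

/-- The key addition `σ_k`, with the key read in `(ℤ/2ⁿℤ)²`. -/
def keyAdd (n : ℕ) (k : ZMod (2 ^ n) × ZMod (2 ^ n)) :
    Equiv.Perm ((Fin n → ZMod 2) × (Fin n → ZMod 2)) :=
  (binEquiv₂ n).trans ((Equiv.addRight k).trans (binEquiv₂ n).symm)

/-- The Feistel map `(x₁, x₂) ↦ (x₂, x₁ ⊕ ρ(x₂))` as a permutation. -/
def feistel (n : ℕ) (ρ : (Fin n → ZMod 2) → (Fin n → ZMod 2)) :
    Equiv.Perm ((Fin n → ZMod 2) × (Fin n → ZMod 2)) where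
  toFun x := (x.2, x.1 + ρ x.2)
  invFun x := (x.2 - ρ x.1, x.1)
  left_inv x := by simp
  right_inv x := by simp

/-- The generating set of round functions. -/
def roundSet (n : ℕ) (ρ : (Fin n → ZMod 2) → (Fin n → ZMod 2)) :
    Set (Equiv.Perm ((Fin n → ZMod 2) × (Fin n → ZMod 2))) :=
  {g | ∃ k₁ k₂ h₁ h₂, ∀ x : (Fin n → ZMod 2) × (Fin n → ZMod 2),
    g x = (boxAdd n (boxAdd n x.2 k₂) h₁,
      boxAdd n (boxAdd n x.1 k₁ + ρ (boxAdd n x.2 k₂)) h₂)}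

lemma round_mem (n : ℕ) (ρ : (Fin n → ZMod 2) → (Fin n → ZMod 2))
    (h : ZMod (2 ^ n) × ZMod (2 ^ n)) : keyAdd n h * feistel n ρ ∈ roundSet n ρ := by
  refine ⟨(binEquiv n).symm 0, (binEquiv n).symm 0, (binEquiv n).symm h.1,
    (binEquiv n).symm h.2, fun x => ?_⟩
  simp only [boxAdd_eq, Equiv.apply_symm_apply, add_zero, Equiv.symm_apply_apply]
  rfl

lemma feistel_mem (n : ℕ) (ρ : (Fin n → ZMod 2) → (Fin n → ZMod 2)) :
    feistel n ρ ∈ Subgroup.closure (roundSet n ρ) := by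
  have h := Subgroup.subset_closure (round_mem n ρ 0)
  have e : keyAdd n 0 = 1 := by
    ext1 x
    simp [keyAdd]
  rwa [e, one_mul] at h

lemma keyAdd_mem (n : ℕ) (ρ : (Fin n → ZMod 2) → (Fin n → ZMod 2))
    (k : ZMod (2 ^ n) × ZMod (2 ^ n)) : keyAdd n k ∈ Subgroup.closure (roundSet n ρ) :=
  (Subgroup.mul_mem_cancel_right _ (feistel_mem n ρ)).1
    (Subgroup.subset_closure (round_mem n ρ k))

/-- The class of `0` in a partition of `(𝔽₂ⁿ)²` invariant under all key additions is a subgroup of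
`(ℤ/2ⁿℤ)²`, and the partition is its partition into cosets. -/
lemma exists_coset_subgroup (n : ℕ) (B : Set (Set ((Fin n → ZMod 2) × (Fin n → ZMod 2))))
    (hB : Setoid.IsPartition B) (hinv : ∀ b ∈ B, ∀ k, keyAdd n k '' b ∈ B) :
    ∃ U : AddSubgroup (ZMod (2 ^ n) × ZMod (2 ^ n)), ∀ x y,
      binEquiv₂ n y - binEquiv₂ n x ∈ U ↔ ∃ b ∈ B, x ∈ b ∧ y ∈ b := by
  have huniq : ∀ {b c x}, b ∈ B → c ∈ B → x ∈ b → x ∈ c → b = c := fun hb hc hxb hxc =>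
    (hB.2 _).unique ⟨hb, hxb⟩ ⟨hc, hxc⟩
  let r : ZMod (2 ^ n) × ZMod (2 ^ n) → ZMod (2 ^ n) × ZMod (2 ^ n) → Prop :=
    fun p q => ∃ b ∈ B, (binEquiv₂ n).symm p ∈ b ∧ (binEquiv₂ n).symm q ∈ b
  have hrefl : ∀ p, r p p := fun p => by
    obtain ⟨b, ⟨hb, hp⟩, -⟩ := hB.2 ((binEquiv₂ n).symm p)
    exact ⟨b, hb, hp, hp⟩
  have hsymm : ∀ p q, r p q → r q p := fun p q ⟨b, hb, h1, h2⟩ => ⟨b, hb, h2, h1⟩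
  have htrans : ∀ p q t, r p q → r q t → r p t := by
    rintro p q t ⟨b, hb, h1, h2⟩ ⟨c, hc, h3, h4⟩
    obtain rfl := huniq hb hc h2 h3
    exact ⟨b, hb, h1, h4⟩
  have hadd : ∀ p q k, r p q → r (p + k) (q + k) := by
    rintro p q k ⟨b, hb, h1, h2⟩
    have e : ∀ p, keyAdd n k ((binEquiv₂ n).symm p) = (binEquiv₂ n).symm (p + k) := by
      intro p; simp [keyAdd]
    exact ⟨_, hinv b hb k, ⟨_, h1, e p⟩, ⟨_, h2, e q⟩⟩
  refine ⟨{ carrier := {p | r 0 p}, zero_mem' := hrefl 0, add_mem' := ?_, neg_mem' := ?_ }, ?_⟩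
  · intro p q hp hq
    have := hadd _ _ q hp
    rw [zero_add] at this
    exact htrans _ _ _ hq this
  · intro p hp
    have := hadd _ _ (-p) hp
    rw [zero_add, add_neg_cancel] at this
    exact hsymm _ _ this
  · intro x y
    have h1 : r 0 (binEquiv₂ n y - binEquiv₂ n x) ↔ r (binEquiv₂ n x) (binEquiv₂ n y) := by
      constructor
      · intro h
        simpa using hadd _ _ (binEquiv₂ n x) h
      · intro h
        simpa [sub_eq_add_neg] using hadd _ _ (-binEquiv₂ n x) h
    refine Iff.trans h1 ?_
    simp only [r, Equiv.symm_apply_apply]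

lemma partition_invariant_trivial (n : ℕ) (ρ : (Fin n → ZMod 2) → (Fin n → ZMod 2))
    (hρ : Function.Bijective ρ)
    (hA : ∀ A : AddSubgroup (ZMod (2 ^ n)),
      (∀ v w, binEquiv n v - binEquiv n w ∈ A → binEquiv n (ρ v) - binEquiv n (ρ w) ∈ A) →
      A = ⊥ ∨ A = ⊤)
    (B : Set (Set ((Fin n → ZMod 2) × (Fin n → ZMod 2))))
    (hB : Setoid.IsPartition B)
    (hinv : ∀ b ∈ B, ∀ g ∈ Subgroup.closure (roundSet n ρ), (⇑g) '' b ∈ B) :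
    B = {Set.univ} ∨ B = Set.range fun v => {v} := by
  obtain ⟨U, hU⟩ := exists_coset_subgroup n B hB fun b hb k => hinv b hb _ (keyAdd_mem n ρ k)
  have hclass : ∀ b ∈ B, ∀ x ∈ b, b = {y | binEquiv₂ n y - binEquiv₂ n x ∈ U} := by
    intro b hb x hx
    ext y
    refine ⟨fun hy => (hU x y).2 ⟨b, hb, hx, hy⟩, fun hy => ?_⟩
    obtain ⟨c, hc, hxc, hyc⟩ := (hU x y).1 hy
    rwa [(hB.2 x).unique ⟨hb, hx⟩ ⟨hc, hxc⟩]
  have hstep : ∀ g ∈ Subgroup.closure (roundSet n ρ), ∀ x y,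
      binEquiv₂ n y - binEquiv₂ n x ∈ U → binEquiv₂ n (g y) - binEquiv₂ n (g x) ∈ U := by
    intro g hg x y h
    obtain ⟨b, hb, hx, hy⟩ := (hU x y).1 h
    exact (hU _ _).2 ⟨_, hinv b hb g hg, ⟨x, hx, rfl⟩, ⟨y, hy, rfl⟩⟩
  have hfeistel := feistel_subgroup n ρ hρ hA U (fun x y x' y' => by
    constructor
    · exact hstep _ (feistel_mem n ρ) (x, y) (x', y')
    · intro h
      have := hstep _ (inv_mem (feistel_mem n ρ)) (feistel n ρ (x, y)) (feistel n ρ (x', y')) h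
      simp only [Equiv.Perm.inv_def, Equiv.symm_apply_apply] at this
      exact this)
  have hne : ∀ b ∈ B, b.Nonempty := fun b hb => Set.nonempty_iff_ne_empty.2 fun h =>
    hB.1 (h ▸ hb)
  rcases hfeistel with rfl | rfl
  · right
    have hsing : ∀ b ∈ B, ∀ x ∈ b, b = {x} := by
      intro b hb x hx
      rw [hclass b hb x hx]
      ext y
      simp [sub_eq_zero]
    ext b
    constructor
    · intro hb
      obtain ⟨x, hx⟩ := hne b hb
      exact ⟨x, (hsing b hb x hx).symm⟩
    · rintro ⟨x, rfl⟩
      obtain ⟨b, ⟨hb, hx⟩, -⟩ := hB.2 x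
      change {x} ∈ B
      rwa [← hsing b hb x hx]
  · left
    have huniv : ∀ b ∈ B, b = Set.univ := by
      intro b hb
      obtain ⟨x, hx⟩ := hne b hb
      rw [hclass b hb x hx]
      simp
    ext b
    constructor
    · exact huniv b
    · rintro rfl
      obtain ⟨b, ⟨hb, -⟩, -⟩ := hB.2 0
      exact huniv b hb ▸ hb

/-- **primitivity of the generalized GOST-like cipher.** Let `γ` be a
parallel S-box with bijective bricks `γ_j` satisfying `γ_j(0) ≠ 0`, `λ` a bijective
linear map preserving no non-trivial type, `ρ = λ ∘ γ`, and let
`𝒫(x₁,x₂) = (x₂, x₁ ⊕ ρ(x₂))` and `σ_{(k₁,k₂)}(x₁,x₂) = (x₁ ⊞ k₁, x₂ ⊞ k₂)`.  Then the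
group generated by the round functions `σ_k` then `𝒫` then `σ_h` is primitive on
`V = 𝔽₂ⁿ × 𝔽₂ⁿ`. -/
theorem stmt_18 (m δ : ℕ) (hm : 2 ≤ m) (hδ : 2 ≤ δ)
    (γbrick : Fin δ → (Fin m → ZMod 2) → (Fin m → ZMod 2))
    (hγbij : ∀ j, Function.Bijective (γbrick j))
    (hγ0 : ∀ j, γbrick j 0 ≠ 0)
    (γ : (Fin (m * δ) → ZMod 2) → (Fin (m * δ) → ZMod 2))
    (hγ : ∀ v (j : Fin δ), brickProj m δ (γ v) j = γbrick j (brickProj m δ v j))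
    (lam : (Fin (m * δ) → ZMod 2) →ₗ[ZMod 2] (Fin (m * δ) → ZMod 2))
    (hlam : Function.Bijective lam)
    (hntp : ∀ (D : Set (Fin (m * δ) → ZMod 2)) (nw nr nb : ℕ),
      StdForm m δ D nw nr nb → nw ≠ δ → nb ≠ δ →
      ¬ SameType m δ D ((fun v => lam v) '' D)) :
    (∀ v w : (Fin (m * δ) → ZMod 2) × (Fin (m * δ) → ZMod 2),
      ∃ g ∈ Subgroup.closure
        {g : Equiv.Perm ((Fin (m * δ) → ZMod 2) × (Fin (m * δ) → ZMod 2)) |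
          ∃ k₁ k₂ h₁ h₂, ∀ x : (Fin (m * δ) → ZMod 2) × (Fin (m * δ) → ZMod 2),
            g x = (boxAdd (m * δ) (boxAdd (m * δ) x.2 k₂) h₁,
                   boxAdd (m * δ)
                     (boxAdd (m * δ) x.1 k₁ + lam (γ (boxAdd (m * δ) x.2 k₂))) h₂)},
        g v = w) ∧
    (∀ B : Set (Set ((Fin (m * δ) → ZMod 2) × (Fin (m * δ) → ZMod 2))),
      Setoid.IsPartition B →
      (∀ b ∈ B, ∀ g ∈ Subgroup.closure
        {g : Equiv.Perm ((Fin (m * δ) → ZMod 2) × (Fin (m * δ) → ZMod 2)) |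
          ∃ k₁ k₂ h₁ h₂, ∀ x : (Fin (m * δ) → ZMod 2) × (Fin (m * δ) → ZMod 2),
            g x = (boxAdd (m * δ) (boxAdd (m * δ) x.2 k₂) h₁,
                   boxAdd (m * δ)
                     (boxAdd (m * δ) x.1 k₁ + lam (γ (boxAdd (m * δ) x.2 k₂))) h₂)},
        (⇑g) '' b ∈ B) →
      B = {Set.univ} ∨
        B = Set.range fun v : (Fin (m * δ) → ZMod 2) × (Fin (m * δ) → ZMod 2) =>
          ({v} : Set ((Fin (m * δ) → ZMod 2) × (Fin (m * δ) → ZMod 2)))) := by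
  have hγinj : Function.Injective γ := fun v w h => brickProj_ext m δ fun j =>
    (hγbij j).1 (by rw [← hγ, ← hγ, h])
  have hρinj : Function.Injective fun v => lam (γ v) := hlam.1.comp hγinj
  refine ⟨fun v w => ⟨keyAdd (m * δ) (binEquiv₂ _ w - binEquiv₂ _ v),
    keyAdd_mem (m * δ) (fun v => lam (γ v)) _, by simp [keyAdd]⟩, fun B hB hinv => ?_⟩
  exact partition_invariant_trivial (m * δ) (fun v => lam (γ v))
    (Finite.injective_iff_bijective.1 hρinj)
    (coset_preserved m δ (by omega) γbrick hγbij γ hγ lam hρinj hntp) B hB hinv
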